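/- Let Γ and Ω be two non-parallel affine planes in ℝ³, let p be a point lying on neither plane, and let f be the central projection from Γ to Ω through p. Let a, b, c be points of Γ such that b lies strictly between a and c (i.e., b is in the open segment from a to c), and suppose that the closed segment from a to c contains no vanishing point of Γ. Then f(b) lies strictly between f(a) and f(c), and the closed segment from f(a) to f(c) contains no vanishing point of Ω. -/

import Mathlib

noncomputable section

/-- Points of `ℝ³`. -/
abbrev E3 : Type := Fin 3 → ℝ

/-- An affine plane in `ℝ³`: a nonempty affine subspace whose direction has dimension 2. -/
def IsPlane (s : AffineSubspace ℝ E3) : Prop :=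
  (s : Set E3).Nonempty ∧ Module.finrank ℝ s.direction = 2

/-- `v` is a vanishing point of the plane `Γ` with respect to the central projection from
`Γ` to `Ω` through `p`: it lies in `Γ` and the line through `p` and `v` is parallel to `Ω`. -/
def VanishingPt (Γ Ω : AffineSubspace ℝ E3) (p v : E3) : Prop :=
  v ∈ Γ ∧ v -ᵥ p ∈ Ω.direction

/-- `f` is the central projection from `Γ` to `Ω` through `p`: every non-vanishing point
`a` of `Γ` is sent to the (unique) intersection point of the line through `p` and `a`
with `Ω`. -/
def IsCentralProj (Γ Ω : AffineSubspace ℝ E3) (p : E3) (f : E3 → E3) : Prop :=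
  ∀ a ∈ Γ, a -ᵥ p ∉ Ω.direction → f a ∈ Ω ∧ f a ∈ affineSpan ℝ {p, a}

lemma plane_functional (S : AffineSubspace ℝ E3) (p : E3) (hS : IsPlane S) (hp : p ∉ S) :
    ∃ φ : E3 →ₗ[ℝ] ℝ, (∀ v, v ∈ S.direction ↔ φ v = 0) ∧ ∀ x ∈ S, φ x = φ p + 1 := by
  obtain ⟨⟨q, hq⟩, hd⟩ := hS
  have hq' : q ∈ S := hq
  have hn : q - p ∉ S.direction := by
    intro h
    apply hp
    have h2 := AffineSubspace.vadd_mem_of_mem_direction (S.direction.neg_mem h) hq'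
    simpa using h2
  obtain ⟨g, hg, hle⟩ := Submodule.exists_le_ker_of_notMem hn
  have hker : Module.finrank ℝ (LinearMap.ker g) = 2 := by
    have h1 := LinearMap.finrank_range_add_finrank_ker g
    have h2 : LinearMap.range g = ⊤ :=
      LinearMap.range_eq_top.2 (LinearMap.surjective (by rintro rfl; simp at hg))
    rw [h2] at h1
    simp at h1
    omega
  have heq : S.direction = LinearMap.ker g :=
    Submodule.eq_of_le_of_finrank_eq hle (by rw [hd, hker])
  refine ⟨(g (q - p))⁻¹ • g, ?_, ?_⟩
  · intro v
    rw [heq]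
    simp only [LinearMap.mem_ker, LinearMap.smul_apply, smul_eq_mul, mul_eq_zero, inv_eq_zero]
    tauto
  · intro x hx
    have h3 : g (x - q) = 0 := by
      have := AffineSubspace.vsub_mem_direction hx hq'
      rw [heq] at this
      simpa using this
    have h4 : g x = g p + g (q - p) := by
      rw [map_sub] at h3 ⊢
      linarith
    simp only [LinearMap.smul_apply, smul_eq_mul]
    rw [h4, mul_add, inv_mul_cancel₀ hg]

/-- If `b` lies strictly between `a` and `c` in `Γ` and the closed segment from `a` to `c`
contains no vanishing point of `Γ`, then `f b` lies strictly between `f a` and `f c`, and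
the closed segment from `f a` to `f c` contains no vanishing point of `Ω`. -/
theorem centralProj_between
    (Γ Ω : AffineSubspace ℝ E3) (p : E3) (f : E3 → E3)
    (hΓ : IsPlane Γ) (hΩ : IsPlane Ω)
    (hnp : Γ.direction ≠ Ω.direction)
    (hpΓ : p ∉ Γ) (hpΩ : p ∉ Ω)
    (hf : IsCentralProj Γ Ω p f)
    (a b c : E3) (ha : a ∈ Γ) (hb : b ∈ Γ) (hc : c ∈ Γ)
    (hbtw : Sbtw ℝ a b c)
    (hnv : ∀ x ∈ segment ℝ a c, ¬ VanishingPt Γ Ω p x) :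
    Sbtw ℝ (f a) (f b) (f c) ∧
      ∀ y ∈ segment ℝ (f a) (f c), ¬ VanishingPt Ω Γ p y := by
  obtain ⟨φ, hφ, hφ1⟩ := plane_functional Ω p hΩ hpΩ
  obtain ⟨ψ, hψ, hψ1⟩ := plane_functional Γ p hΓ hpΓ
  have hmem : ∀ t : ℝ, (1 - t) • a + t • c ∈ Γ := by
    intro t
    have := AffineMap.lineMap_mem t ha hc
    rwa [AffineMap.lineMap_apply_module] at this
  have hne : ∀ t : ℝ, 0 ≤ t → t ≤ 1 → (1 - t) * (φ a - φ p) + t * (φ c - φ p) ≠ 0 := by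
    intro t h0 h1 h
    refine hnv ((1 - t) • a + t • c) ⟨1 - t, t, by linarith, h0, by ring, rfl⟩ ⟨hmem t, ?_⟩
    rw [hφ]
    simp only [vsub_eq_sub, map_sub, map_add, map_smul, smul_eq_mul]
    linarith
  have hα : φ a - φ p ≠ 0 := by simpa using hne 0 le_rfl zero_le_one
  have hγ : φ c - φ p ≠ 0 := by simpa using hne 1 zero_le_one le_rfl
  -- the projection in coordinates
  have hproj : ∀ x ∈ Γ, φ x - φ p ≠ 0 → f x = p + (φ x - φ p)⁻¹ • (x - p) := by
    intro x hx hx0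
    obtain ⟨h1, h2⟩ := hf x hx (by rw [hφ]; simpa using hx0)
    obtain ⟨t, ht⟩ := mem_affineSpan_pair_iff_exists_lineMap_eq.1 h2
    rw [AffineMap.lineMap_apply_module'] at ht
    have h3 := hφ1 _ h1
    rw [← ht] at h3
    simp only [map_sub, map_add, map_smul, smul_eq_mul] at h3
    have h4 : t = (φ x - φ p)⁻¹ := eq_inv_of_mul_eq_one_left (by linarith)
    rw [← ht, h4, add_comm]
  obtain ⟨⟨s, ⟨hs0, hs1⟩, hs⟩, hba, hbc⟩ := hbtw
  rw [AffineMap.lineMap_apply_module] at hs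
  have hβ := hne s hs0 hs1
  have hs0' : 0 < s := lt_of_le_of_ne hs0 (by rintro rfl; apply hba; simp [← hs])
  have hs1' : s < 1 := lt_of_le_of_ne hs1 (by rintro rfl; apply hbc; simp [← hs])
  have hφb : φ b - φ p = (1 - s) * (φ a - φ p) + s * (φ c - φ p) := by
    rw [← hs]
    simp only [map_add, map_smul, smul_eq_mul]
    ring
  have hfa := hproj a ha hα
  have hfc := hproj c hc hγ
  have hfb := hproj b hb (by rwa [hφb])
  have hac : a ≠ c := by
    rintro rfl
    apply hba
    rw [← hs, ← add_smul]
    simp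
  have hψa := hψ1 a ha
  have hψc := hψ1 c hc
  rw [hφb] at hfb
  generalize φ a - φ p = α at *
  generalize φ c - φ p = γ at *
  have hpos : 0 < α * γ := by
    by_contra hcon
    have hlt : α * γ < 0 := lt_of_le_of_ne (not_lt.1 hcon) (mul_ne_zero hα hγ)
    have hd : α - γ ≠ 0 := by
      intro h
      have : α = γ := by linarith
      subst this
      nlinarith [mul_self_nonneg α]
    have hd2 : 0 < (α - γ) ^ 2 := by positivity
    have e1 : α / (α - γ) = (α * (α - γ)) / (α - γ) ^ 2 := by field_simp
    refine hne (α / (α - γ)) ?_ ?_ (by field_simp; ring)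
    · rw [e1]
      apply div_nonneg _ hd2.le
      nlinarith [mul_self_nonneg α]
    · rw [e1, div_le_one hd2]
      nlinarith [mul_self_nonneg γ]
  have hαγ : 0 < γ / α := by
    have : γ / α = (α * γ) / α ^ 2 := by field_simp
    rw [this]; positivity
  have hfne : f a ≠ f c := by
    intro h
    rw [hfa, hfc] at h
    have h1 := add_left_cancel h
    have h2 := congrArg ψ h1
    simp only [map_sub, map_smul, smul_eq_mul, hψa, hψc, add_sub_cancel_left, mul_one] at h2
    rw [h2] at h1
    have h3 := smul_right_injective E3 (inv_ne_zero hγ) h1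
    exact hac (sub_left_injective h3)
  set r : ℝ := s * γ / ((1 - s) * α + s * γ) with hr
  have hr' : r = s * (γ / α) / ((1 - s) + s * (γ / α)) := by
    rw [hr]
    have : (1 - s) + s * (γ / α) = ((1 - s) * α + s * γ) / α := by field_simp
    rw [this]
    field_simp
  have hden : 0 < (1 - s) + s * (γ / α) := by
    have := mul_pos hs0' hαγ
    linarith
  have hr0 : 0 < r := by
    rw [hr']; exact div_pos (mul_pos hs0' hαγ) hden
  have hr1 : r < 1 := by
    rw [hr', div_lt_one hden]; linarith
  have hline : AffineMap.lineMap (f a) (f c) r = f b := by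
    rw [AffineMap.lineMap_apply_module, hfa, hfb, hfc, ← hs, hr]
    ext i
    simp only [Pi.add_apply, Pi.smul_apply, Pi.sub_apply, smul_eq_mul]
    field_simp
    ring
  refine ⟨?_, ?_⟩
  · rw [← hline, sbtw_lineMap_iff]
    exact ⟨hfne, hr0, hr1⟩
  · rintro y ⟨u, v, hu, hv, huv, rfl⟩ ⟨-, hy⟩
    rw [hψ, hfa, hfc] at hy
    simp only [vsub_eq_sub, map_sub, map_add, map_smul, smul_eq_mul, hψa, hψc,
      add_sub_cancel_left, mul_one] at hy
    have hu' : u = 1 - v := by linarith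
    subst hu'
    have h5 : (1 - v) * α⁻¹ + v * γ⁻¹ = 0 := by linarith
    field_simp at h5
    refine hne (1 - v) hu (by linarith) ?_
    linarith
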